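/- For integers a_0, …, a_15, the integer N_2 is twice an odd integer if and only if N_4 is twice an odd integer. -/

import Mathlib

open Complex Finset

noncomputable def zeta16 : ℂ := Complex.exp (2 * Real.pi * Complex.I / 16)

noncomputable def fpoly (a : Fin 16 → ℤ) (x : ℂ) : ℂ := ∑ k : Fin 16, (a k : ℂ) * x ^ (k : ℕ)

noncomputable def Nprod (a : Fin 16 → ℤ) (d : ℕ) : ℂ :=
  ∏ l ∈ Finset.filter (fun l => Nat.gcd l 16 = d) (Finset.range 16), fpoly a (zeta16 ^ l)

def circMatrix (a : Fin 16 → ℤ) : Matrix (Fin 16) (Fin 16) ℤ := fun i j => a (i - j)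

def S16 : Set ℤ := { n | ∃ a : Fin 16 → ℤ, n = (circMatrix a).det }

def bcoef (a : Fin 16 → ℤ) (k : Fin 16) : ℤ := (a k + a (k + 8)) + (a (k + 4) + a (k + 12))
def ccoef (a : Fin 16 → ℤ) (k : Fin 16) : ℤ := (a k + a (k + 8)) - (a (k + 4) + a (k + 12))
def ecoef (a : Fin 16 → ℤ) (k : Fin 16) : ℤ := a k - a (k + 8)

/-!
The Graeffe transform `g` of an integer polynomial `f` is given by `f(x) f(-x) = g(x²)`. Pairing `x`
with `-x`, the product of `f` over the primitive `2m`-th roots of unity (`m` even) is the product of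
`g` over the primitive `m`-th ones; hence the product over the primitive `2^(k+1)`-th roots is the
value at `-1` of the `k`-fold transform of `f`. By Frobenius `g ≡ f` mod 2, and each further
transform turns a congruence mod `2^m` into one mod `2^(m+1)`, so the once and twice transformed
polynomials agree mod 4. Taking values at `-1` gives `N_2 ≡ N_4` mod 4.
-/

open Polynomial

section Graeffe

variable {R : Type*} [CommRing R]

/-- The Dandelin–Graeffe transform `f(√X) f(-√X)`, encoded without square roots: it is
`e(X)² - X o(X)²` where `f(X) = e(X²) + X o(X²)`. -/
noncomputable def graeffe (f : R[X]) : R[X] :=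
  contract 2 f ^ 2 - X * contract 2 f.divX ^ 2

lemma expand_contract_add_X_mul_expand_contract_divX (f : R[X]) :
    expand R 2 (contract 2 f) + X * expand R 2 (contract 2 f.divX) = f := by
  ext n
  rcases n with _ | n
  · simp [coeff_expand, coeff_contract]
  · simp only [coeff_add, coeff_X_mul, coeff_expand two_pos, coeff_contract two_ne_zero, coeff_divX]
    rcases Nat.even_or_odd n with hn | hn
    · rw [if_neg (by grind), if_pos hn.two_dvd, Nat.div_mul_cancel hn.two_dvd, zero_add]
    · rw [if_pos (by grind), if_neg (by grind), Nat.div_mul_cancel (by grind), add_zero]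

lemma expand_graeffe (f : R[X]) : expand R 2 (graeffe f) = f * f.comp (-X) := by
  have comp_neg_X (g : R[X]) : (expand R 2 g).comp (-X) = expand R 2 g := by
    simp [expand_eq_comp_X_pow, comp_assoc]
  conv_rhs => rw [← expand_contract_add_X_mul_expand_contract_divX f]
  simp only [graeffe, map_sub, map_mul, map_pow, expand_X, add_comp, mul_comp, X_comp,
    comp_neg_X]
  ring

lemma aeval_sq_graeffe {A : Type*} [CommRing A] [Algebra R A] (f : R[X]) (x : A) :
    aeval (x ^ 2) (graeffe f) = aeval x f * aeval (-x) f := by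
  rw [← expand_aeval, expand_graeffe, map_mul, aeval_comp, map_neg, aeval_X]

lemma map_graeffe {S : Type*} [CommRing S] (φ : R →+* S) (f : R[X]) :
    (graeffe f).map φ = graeffe (f.map φ) := by
  apply expand_injective two_pos
  rw [← map_expand, expand_graeffe, expand_graeffe, Polynomial.map_mul, map_comp,
    Polynomial.map_neg, map_X]

lemma graeffe_zmod_two (f : (ZMod 2)[X]) : graeffe f = f := by
  apply expand_injective two_pos
  rw [expand_graeffe, CharTwo.neg_eq, comp_X, ZMod.expand_card, sq]

lemma two_dvd_graeffe_sub_self (f : ℤ[X]) : 2 ∣ graeffe f - f := by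
  have hmap : (graeffe f - f).map (Int.castRingHom (ZMod 2)) = 0 := by
    rw [Polynomial.map_sub, map_graeffe, graeffe_zmod_two, sub_self]
  refine (C_dvd_iff_dvd_coeff 2 _).mpr fun n ↦ (ZMod.intCast_zmod_eq_zero_iff_dvd _ 2).mp ?_
  simpa only [coeff_map, coeff_zero, eq_intCast] using congr_arg (coeff · n) hmap

lemma two_pow_succ_dvd_sq_sub_sq {x y : R} {m : ℕ} (hm : m ≠ 0) (h : 2 ^ m ∣ x - y) :
    2 ^ (m + 1) ∣ x ^ 2 - y ^ 2 := by
  have hadd : 2 ∣ x + y := by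
    rw [show x + y = (x - y) + 2 * y by ring]
    exact dvd_add ((dvd_pow_self 2 hm).trans h) (dvd_mul_right 2 y)
  rw [sq_sub_sq, mul_comm, pow_succ]
  exact mul_dvd_mul h hadd

lemma two_pow_succ_dvd_graeffe_sub_graeffe {f g : R[X]} {m : ℕ} (hm : m ≠ 0)
    (h : 2 ^ m ∣ f - g) : 2 ^ (m + 1) ∣ graeffe f - graeffe g := by
  have hC : (2 ^ m : R[X]) = C (2 ^ m) := by rw [C_pow, C_ofNat]
  rw [hC, C_dvd_iff_dvd_coeff] at h
  have heven : 2 ^ m ∣ contract 2 f - contract 2 g := by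
    rw [hC, C_dvd_iff_dvd_coeff]
    intro n
    simpa only [coeff_sub, coeff_contract two_ne_zero] using h (n * 2)
  have hodd : 2 ^ m ∣ contract 2 f.divX - contract 2 g.divX := by
    rw [hC, C_dvd_iff_dvd_coeff]
    intro n
    simpa only [coeff_sub, coeff_contract two_ne_zero, coeff_divX] using h (n * 2 + 1)
  have hsplit : graeffe f - graeffe g = (contract 2 f ^ 2 - contract 2 g ^ 2)
      - X * (contract 2 f.divX ^ 2 - contract 2 g.divX ^ 2) := by
    unfold graeffe
    ring
  rw [hsplit]
  exact dvd_sub (two_pow_succ_dvd_sq_sub_sq hm heven)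
    ((two_pow_succ_dvd_sq_sub_sq hm hodd).mul_left X)

lemma two_pow_succ_dvd_iterate_graeffe_succ_sub (f : ℤ[X]) (k : ℕ) :
    2 ^ (k + 1) ∣ graeffe^[k + 1] f - graeffe^[k] f := by
  induction k with
  | zero => simpa using two_dvd_graeffe_sub_self f
  | succ k ih =>
    simpa only [← Function.iterate_succ_apply' graeffe] using
      two_pow_succ_dvd_graeffe_sub_graeffe k.succ_ne_zero ih

lemma two_pow_succ_dvd_iterate_graeffe_sub (f : ℤ[X]) {j k : ℕ} (hkj : k ≤ j) :
    2 ^ (k + 1) ∣ graeffe^[j] f - graeffe^[k] f := by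
  induction j, hkj using Nat.le_induction with
  | base => simp
  | succ j hkj ih =>
    rw [← sub_add_sub_cancel _ (graeffe^[j] f)]
    have hstep : 2 ^ (k + 1) ∣ graeffe^[j + 1] f - graeffe^[j] f :=
      (pow_dvd_pow 2 (by lia)).trans (two_pow_succ_dvd_iterate_graeffe_succ_sub f j)
    exact dvd_add hstep ih

end Graeffe

section PrimitiveRoots

lemma isPrimitiveRoot_pow_iff_of_dvd {M : Type*} [CommMonoid M] {x : M} {p m : ℕ} (hp : p ≠ 0)
    (hpm : p ∣ m) : IsPrimitiveRoot (x ^ p) m ↔ IsPrimitiveRoot x (m * p) := by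
  rw [IsPrimitiveRoot.iff_orderOf, IsPrimitiveRoot.iff_orderOf, orderOf_pow' x hp]
  constructor
  · intro h
    have hpx : p ∣ orderOf x := hpm.trans (h ▸ Nat.div_dvd_of_dvd (Nat.gcd_dvd_left _ _))
    rw [← h, Nat.gcd_eq_right hpx, Nat.div_mul_cancel hpx]
  · intro h
    rw [h, Nat.gcd_mul_left_left, Nat.mul_div_cancel _ hp.bot_lt]

variable {R : Type*} [CommRing R] [IsDomain R]

lemma prod_filter_gcd_eq_prod_primitiveRoots {M : Type*} [CommMonoid M] {n d : ℕ} [NeZero n]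
    {ζ : R} (hζ : IsPrimitiveRoot ζ n) (hd : d ∣ n) (F : R → M) :
    ∏ l ∈ range n with l.gcd n = d, F (ζ ^ l) = ∏ x ∈ primitiveRoots (n / d) R, F x := by
  have hn : n ≠ 0 := NeZero.ne n
  have hnd : 0 < n / d := Nat.pos_of_dvd_of_pos (Nat.div_dvd_of_dvd hd) hn.bot_lt
  have pow_iff (l : ℕ) : IsPrimitiveRoot (ζ ^ l) (n / d) ↔ l.gcd n = d := by
    rw [IsPrimitiveRoot.iff_orderOf, (hζ.isOfFinOrder hn).orderOf_pow, ← hζ.eq_orderOf,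
      Nat.gcd_comm, Nat.div_eq_iff_eq_of_dvd_dvd hn (Nat.gcd_dvd_right l n) hd]
  refine prod_nbij (ζ ^ ·) ?_ ?_ ?_ fun _ _ ↦ rfl
  · intro l hl
    exact (mem_primitiveRoots hnd).mpr ((pow_iff l).mpr (mem_filter.mp hl).2)
  · intro i hi j hj hij
    rw [mem_coe, mem_filter, Finset.mem_range] at hi hj
    exact hζ.pow_inj hi.1 hj.1 hij
  · intro x hx
    rw [mem_coe, mem_primitiveRoots hnd] at hx
    have hxn : x ^ n = 1 := (hx.pow_eq_one_iff_dvd n).mpr (Nat.div_dvd_of_dvd hd)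
    obtain ⟨l, hl, rfl⟩ := hζ.eq_pow_of_pow_eq_one hxn
    exact ⟨l, mem_filter.mpr ⟨Finset.mem_range.mpr hl, (pow_iff l).mp hx⟩, rfl⟩

lemma prod_primitiveRoots_mul_two {M : Type*} [CommMonoid M] [NeZero (2 : R)] {m : ℕ} [NeZero m]
    {ζ : R} (hm : 2 ∣ m) (hζ : IsPrimitiveRoot ζ (m * 2)) (F G : R → M)
    (hFG : ∀ x, G (x ^ 2) = F x * F (-x)) :
    ∏ x ∈ primitiveRoots (m * 2) R, F x = ∏ y ∈ primitiveRoots m R, G y := by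
  classical
  have hm0 : 0 < m := NeZero.pos m
  have sq_mem (x : R) : x ^ 2 ∈ primitiveRoots m R ↔ x ∈ primitiveRoots (m * 2) R := by
    rw [mem_primitiveRoots hm0, mem_primitiveRoots (by lia),
      isPrimitiveRoot_pow_iff_of_dvd two_ne_zero hm]
  rw [← prod_fiberwise_of_maps_to fun x ↦ (sq_mem x).mpr]
  refine prod_congr rfl fun y hy ↦ ?_
  obtain ⟨x, rfl⟩ : ∃ x, x ^ 2 = y := by
    have hζ2 : IsPrimitiveRoot (ζ ^ 2) m := (isPrimitiveRoot_pow_iff_of_dvd two_ne_zero hm).mpr hζ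
    obtain ⟨i, -, rfl⟩ :=
      hζ2.eq_pow_of_pow_eq_one (isPrimitiveRoot_of_mem_primitiveRoots hy).pow_eq_one
    exact ⟨ζ ^ i, pow_right_comm ζ i 2⟩
  have hx : x ≠ -x := by
    have hx0 : x ≠ 0 :=
      (isPrimitiveRoot_of_mem_primitiveRoots ((sq_mem x).mp hy)).ne_zero (by lia)
    rw [Ne, eq_neg_iff_add_eq_zero, ← two_mul]
    exact mul_ne_zero two_ne_zero hx0
  have fiber : {z ∈ primitiveRoots (m * 2) R | z ^ 2 = x ^ 2} = {x, -x} := by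
    ext z
    rw [mem_filter, mem_insert, mem_singleton, ← sq_eq_sq_iff_eq_or_eq_neg, and_iff_right_iff_imp]
    intro hz
    rwa [← sq_mem, hz]
  rw [fiber, prod_pair hx, hFG]

lemma primitiveRoots_two_eq [NeZero (2 : R)] : primitiveRoots 2 R = {-1} := by
  have hchar : ringChar R ≠ 2 := by
    intro h
    refine two_ne_zero (α := R) ?_
    simpa only [h, Nat.cast_ofNat] using ringChar.Nat.cast_ringChar (R := R)
  ext x
  rw [mem_primitiveRoots two_pos, mem_singleton]
  exact ⟨fun h ↦ h.eq_neg_one_of_two_right, fun h ↦ h ▸ IsPrimitiveRoot.neg_one (ringChar R) hchar⟩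

lemma prod_aeval_primitiveRoots_two_pow_succ [NeZero (2 : R)] (f : ℤ[X]) {k : ℕ} {ζ : R}
    (hζ : IsPrimitiveRoot ζ (2 ^ (k + 1))) :
    ∏ x ∈ primitiveRoots (2 ^ (k + 1)) R, aeval x f = ((graeffe^[k] f).eval (-1) : ℤ) := by
  induction k generalizing f ζ with
  | zero =>
    rw [zero_add, pow_one, primitiveRoots_two_eq, prod_singleton, Function.iterate_zero_apply]
    simpa using aeval_algebraMap_apply R (-1 : ℤ) f
  | succ k ih =>
    rw [pow_succ, prod_primitiveRoots_mul_two (dvd_pow_self 2 k.succ_ne_zero) hζ (aeval · f)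
      (aeval · (graeffe f)) (aeval_sq_graeffe f), Function.iterate_succ_apply]
    exact ih _ (hζ.pow (by positivity) (pow_succ' 2 (k + 1)))

end PrimitiveRoots

lemma fpoly_eq_aeval_ofFn (a : Fin 16 → ℤ) (x : ℂ) : fpoly a x = aeval x (ofFn 16 a) := by
  simp [fpoly, ofFn_eq_sum_monomial, aeval_monomial]

lemma isPrimitiveRoot_zeta16 : IsPrimitiveRoot zeta16 16 := by
  simpa [zeta16] using isPrimitiveRoot_exp 16 (by simp)

lemma Nprod_eq_prod_primitiveRoots (a : Fin 16 → ℤ) {d : ℕ} (hd : d ∣ 16) :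
    Nprod a d = ∏ x ∈ primitiveRoots (16 / d) ℂ, aeval x (ofFn 16 a) := by
  simp only [Nprod, fpoly_eq_aeval_ofFn]
  exact prod_filter_gcd_eq_prod_primitiveRoots isPrimitiveRoot_zeta16 hd (aeval · (ofFn 16 a))

lemma exists_odd_eq_two_mul_iff_of_modEq_four {m n : ℤ} (h : m ≡ n [ZMOD 4]) :
    (∃ t : ℤ, Odd t ∧ m = 2 * t) ↔ (∃ t : ℤ, Odd t ∧ n = 2 * t) := by
  have iff_emod (l : ℤ) : (∃ t : ℤ, Odd t ∧ l = 2 * t) ↔ l % 4 = 2 :=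
    ⟨fun ⟨t, ht, hl⟩ ↦ by grind, fun hl ↦ ⟨l / 2, by grind, by grind⟩⟩
  rw [iff_emod, iff_emod, h.eq]

theorem N2_twice_odd_iff_N4_twice_odd_general {R : Type*} [CommRing R] [IsDomain R] [CharZero R]
    (f : ℤ[X]) {j k : ℕ} (hkj : k ≤ j) {ζ : R} (hζ : IsPrimitiveRoot ζ (2 ^ j)) {M N : ℤ}
    (hM : (M : R) = ∏ x ∈ primitiveRoots (2 ^ j) R, aeval x f)
    (hN : (N : R) = ∏ x ∈ primitiveRoots (2 ^ k) R, aeval x f) :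
    M ≡ N [ZMOD 2 ^ k] := by
  rcases k with _ | k
  · simpa only [pow_zero] using Int.modEq_one
  rcases j with _ | j
  · contradiction
  have hζk := hζ.pow (by positivity) (pow_sub_mul_pow 2 hkj).symm
  rw [prod_aeval_primitiveRoots_two_pow_succ f hζ, Int.cast_inj] at hM
  rw [prod_aeval_primitiveRoots_two_pow_succ f hζk, Int.cast_inj] at hN
  rw [hM, hN]
  refine (Int.modEq_iff_dvd.mpr ?_).symm
  simpa using map_dvd (evalRingHom (-1))
    (two_pow_succ_dvd_iterate_graeffe_sub f (Nat.le_of_succ_le_succ hkj))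

theorem N2_twice_odd_iff_N4_twice_odd (a : Fin 16 → ℤ)
    (N2 N4 : ℤ) (h2 : (N2 : ℂ) = Nprod a 2) (h4 : (N4 : ℂ) = Nprod a 4) :
    (∃ m : ℤ, Odd m ∧ N2 = 2 * m) ↔ (∃ m : ℤ, Odd m ∧ N4 = 2 * m) := by
  have hζ : IsPrimitiveRoot (zeta16 ^ 2) (2 ^ 3) := isPrimitiveRoot_zeta16.pow (by simp) (by simp)
  rw [Nprod_eq_prod_primitiveRoots a (by norm_num)] at h2 h4
  exact exists_odd_eq_two_mul_iff_of_modEq_four <|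
    N2_twice_odd_iff_N4_twice_odd_general (j := 3) (k := 2) (ofFn 16 a) (by simp) hζ h2 h4
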